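/- arXiv:2506.02318 — 8 statements merged into one kernel-verified Lean document; each statement's English description precedes it below -/
import Mathlib

section
/- Let S ≥ 2 be an integer, let m : Fin S be a distinguished mask token, and let Q : Matrix (Fin S) (Fin S) ℝ be the absorbing rate matrix Q a b = (if b = m then 1 else 0) − (if a = b then 1 else 0) (i.e., Q = 𝟏 eₘᵀ − I). Then for every t : ℝ, Matrix.exp ℝ (t • Q) = (1 − Real.exp (−t)) • (𝟏 eₘᵀ) + Real.exp (−t) • I; equivalently, entrywise, (Matrix.exp ℝ (t • Q)) a b equals exp(−t) if a = b and a ≠ m, equals 1 − exp(−t) if a ≠ b and b = m, equals 1 if a = b = m, and equals 0 otherwise. -/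
/-!
A rate matrix `Q = 𝟏 πᵀ - I` with `∑ π = 1` is the negative of the idempotent `I - 𝟏 πᵀ`. Since
every positive power of an idempotent `p` is `p`, the exponential series of `s • p` is `exp s • p`
except that its constant term is `1` instead of `p`, whence `exp (s • p) = exp s • p + (1 - p)`.
The absorbing chain is the case `π = eₘ`.
-/

open NormedSpace
open scoped Matrix Nat

section Idempotent

theorem smul_pow_of_isIdempotentElem {R A : Type*} [CommSemiring R] [Ring A] [Algebra R A] {p : A}
    (hp : IsIdempotentElem p) (s : R) (n : ℕ) :
    (s • p) ^ n = s ^ n • p + if n = 0 then 1 - p else 0 := by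
  rcases n with _ | n
  · simp
  · simp [smul_pow, hp.pow_succ_eq n]

variable {R A : Type*} [NormedCommRing R] [NormedAlgebra ℚ R] [CompleteSpace R]
  [Ring A] [TopologicalSpace A] [IsTopologicalRing A] [T2Space A]
  [Algebra R A] [ContinuousSMul R A] {p : A}

theorem exp_smul_of_isIdempotentElem (hp : IsIdempotentElem p) (s : R) :
    exp (s • p) = exp s • p + (1 - p) := by
  let : Algebra ℚ A := Algebra.compHom A (algebraMap ℚ R)
  have hasSum_exp_smul : HasSum (fun n : ℕ => ((n !⁻¹ : ℚ) • s ^ n) • p) (exp s • p) :=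
    (exp_series_hasSum_exp' s).smul_const p
  have hasSum_correction : HasSum (fun n : ℕ => if n = 0 then 1 - p else 0) (1 - p) :=
    hasSum_ite_eq 0 (1 - p)
  rw [exp_eq_tsum_rat, ← (hasSum_exp_smul.add hasSum_correction).tsum_eq]
  refine tsum_congr fun n => ?_
  rw [smul_pow_of_isIdempotentElem hp, smul_add, smul_assoc]
  split_ifs with hn <;> simp [hn]

theorem exp_smul_sub_one_of_isIdempotentElem (hp : IsIdempotentElem p) (t : R) :
    exp (t • (p - 1)) = (1 - exp (-t)) • p + exp (-t) • (1 : A) :=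
  calc
    exp (t • (p - 1)) = exp (-t • (1 - p)) := by rw [neg_smul, ← smul_neg, neg_sub]
    _ = exp (-t) • (1 - p) + (1 - (1 - p)) := exp_smul_of_isIdempotentElem hp.one_sub (-t)
    _ = (1 - exp (-t)) • p + exp (-t) • (1 : A) := by module

end Idempotent

theorem isIdempotentElem_vecMulVec {ι R : Type*} [Fintype ι] [Semiring R] {u v : ι → R}
    (h : v ⬝ᵥ u = 1) : IsIdempotentElem (Matrix.vecMulVec u v) := by
  rw [IsIdempotentElem, Matrix.vecMulVec_mul_vecMulVec, h, one_smul]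

theorem absorbing_matrix_exp_general {ι R : Type*} [Fintype ι] [DecidableEq ι] [NormedCommRing R]
    [NormedAlgebra ℚ R] [CompleteSpace R] {π : ι → R} (hπ : ∑ b, π b = 1) {Q : Matrix ι ι R}
    (hQ : ∀ a b, Q a b = π b - if a = b then 1 else 0) (t : R) :
    exp (t • Q) = (1 - exp (-t)) • (Matrix.of fun _ b => π b) + exp (-t) • (1 : Matrix ι ι R) ∧
      ∀ a b, exp (t • Q) a b = (1 - exp (-t)) * π b + if a = b then exp (-t) else 0 := by
  have vecMulVec_one_eq : Matrix.vecMulVec 1 π = Matrix.of fun _ b : ι => π b := by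
    ext a b
    simp [Matrix.vecMulVec_apply]
  have Q_eq : Q = Matrix.vecMulVec 1 π - 1 := by
    ext a b
    simp [hQ, Matrix.one_apply]
  have idempotent : IsIdempotentElem (Matrix.vecMulVec 1 π) :=
    isIdempotentElem_vecMulVec ((dotProduct_one π).trans hπ)
  have exp_eq := exp_smul_sub_one_of_isIdempotentElem idempotent t
  rw [← Q_eq, vecMulVec_one_eq] at exp_eq
  exact ⟨exp_eq, fun a b => by simp [exp_eq, Matrix.one_apply]⟩

/-- The absorbing rate matrix exponential: `exp(tQ) = (1 - e^{-t}) 𝟏 eₘᵀ + e^{-t} I`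
for `Q = 𝟏 eₘᵀ - I`. -/
theorem absorbing_matrix_exp (S : ℕ) (hS : 2 ≤ S) (m : Fin S)
    (Q : Matrix (Fin S) (Fin S) ℝ)
    (hQ : ∀ a b : Fin S, Q a b = (if b = m then (1 : ℝ) else 0) - (if a = b then 1 else 0)) :
    ∀ t : ℝ,
      NormedSpace.exp (t • Q)
          = (1 - Real.exp (-t)) • (Matrix.of fun _ b : Fin S => if b = m then (1 : ℝ) else 0)
            + Real.exp (-t) • (1 : Matrix (Fin S) (Fin S) ℝ) ∧
      ∀ a b : Fin S,
        NormedSpace.exp (t • Q) a b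
          = if a = b then (if a = m then 1 else Real.exp (-t))
            else (if b = m then 1 - Real.exp (-t) else 0) := by
  intro t
  obtain ⟨exp_eq, exp_apply⟩ := absorbing_matrix_exp_general (by simp) hQ t
  rw [← Real.exp_eq_exp_ℝ] at exp_eq exp_apply
  exact ⟨exp_eq, fun a b => by rw [exp_apply]; grind⟩
end

section
/- Define the d-dimensional absorbing rate matrix Q : Matrix X X ℝ by: Q x y = 1 if x and y differ in exactly one coordinate j with x j ≠ m and y j = m; Q x x = −(d − m̄(x)); and Q x y = 0 in all other cases. Then for every t : ℝ and all x0, x ∈ X, the (x0, x) entry of the matrix exponential satisfies (Matrix.exp ℝ (t • Q)) x0 x = ∏_{i : Fin d} P_t (x0 i) (x i). -/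
open Finset

/-- Per-token absorbing transition kernel. -/
noncomputable def absK (S : ℕ) (m : Fin S) (t : ℝ) (a b : Fin S) : ℝ :=
  if a = b then (if a = m then 1 else Real.exp (-t))
  else (if b = m then 1 - Real.exp (-t) else 0)

/-- Forward marginal at time `t` of the absorbing diffusion started at `q0`. -/
noncomputable def fwd (S d : ℕ) (m : Fin S) (q0 : (Fin d → Fin S) → ℝ) (t : ℝ)
    (x : Fin d → Fin S) : ℝ :=
  ∑ x0 : Fin d → Fin S, q0 x0 * ∏ i : Fin d, absK S m t (x0 i) (x i)

/-- Number of masked coordinates. -/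
def nmask (S d : ℕ) (m : Fin S) (x : Fin d → Fin S) : ℕ :=
  (Finset.univ.filter (fun i => x i = m)).card

/-!
On one token, the absorbing rate matrix is `A = J - 1` with `J` the idempotent matrix sending every
token to the mask, so `exp (t A) = J + e⁻ᵗ (1 - J)`, which is the kernel `absK`. The `d`-dimensional
rate matrix is the Kronecker sum of `d` copies of `A`. Its summands commute and each `A ↦ 1 ⊗ ⋯ ⊗ A
⊗ ⋯ ⊗ 1` is a continuous algebra homomorphism, so its exponential is the Kronecker product of the
exponentials of the copies.
-/

section PiKronecker

variable {ι R : Type*} [Fintype ι] [CommSemiring R] {l m n : ι → Type*}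

/-- The Kronecker product `⨂ᵢ A i` of a finite family of matrices, indexed by families of indices
so that no ordering of the factors has to be chosen. -/
def piKronecker (A : ∀ i, Matrix (m i) (n i) R) : Matrix (∀ i, m i) (∀ i, n i) R :=
  Matrix.of fun x y => ∏ i, A i (x i) (y i)

lemma piKronecker_apply (A : ∀ i, Matrix (m i) (n i) R) (x : ∀ i, m i) (y : ∀ i, n i) :
    piKronecker A x y = ∏ i, A i (x i) (y i) := rfl

lemma piKronecker_one [∀ i, DecidableEq (n i)] :
    piKronecker (1 : ∀ i, Matrix (n i) (n i) R) = 1 := by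
  ext x y
  simp [piKronecker_apply, Matrix.one_apply, Fintype.prod_ite_zero, funext_iff]

lemma piKronecker_mul [DecidableEq ι] [∀ i, Fintype (m i)] (A : ∀ i, Matrix (l i) (m i) R)
    (B : ∀ i, Matrix (m i) (n i) R) :
    piKronecker A * piKronecker B = piKronecker fun i => A i * B i := by
  ext x y
  simp [piKronecker_apply, Matrix.mul_apply, Finset.prod_univ_sum, Finset.prod_mul_distrib]

variable [DecidableEq ι] [∀ i, DecidableEq (n i)]

lemma piKronecker_mulSingle_apply (i : ι) (A : Matrix (n i) (n i) R) (x y : ∀ i, n i) :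
    piKronecker (Pi.mulSingle i A) x y = if ∀ j ≠ i, x j = y j then A (x i) (y i) else 0 := by
  have hoff : ∏ j ∈ univ.erase i, (Pi.mulSingle i A : ∀ j, Matrix (n j) (n j) R) j (x j) (y j) =
      if ∀ j ≠ i, x j = y j then 1 else 0 := by
    calc _ = ∏ j ∈ univ.erase i, if x j = y j then (1 : R) else 0 :=
          prod_congr rfl fun j hj => by
            rw [Pi.mulSingle_eq_of_ne (ne_of_mem_erase hj), Matrix.one_apply]
      _ = _ := by simp [Finset.prod_boole]
  rw [piKronecker_apply, ← mul_prod_erase _ _ (mem_univ i), hoff, Pi.mulSingle_eq_same, mul_ite,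
    mul_one, mul_zero]

variable [∀ i, Fintype (n i)]

/-- The Kronecker product of square matrices as a monoid homomorphism, which transports the
combinatorics of `Pi.mulSingle` to tensor products. -/
def piKroneckerHom : (∀ i, Matrix (n i) (n i) R) →* Matrix (∀ i, n i) (∀ i, n i) R where
  toFun := piKronecker
  map_one' := piKronecker_one
  map_mul' A B := (piKronecker_mul A B).symm

lemma piKroneckerHom_apply (A : ∀ i, Matrix (n i) (n i) R) :
    piKroneckerHom A = piKronecker A := rfl

/-- The matrix `1 ⊗ ⋯ ⊗ A ⊗ ⋯ ⊗ 1` acting as `A` in coordinate `i`, as an algebra homomorphism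
in `A`. -/
def piKroneckerSingle (i : ι) : Matrix (n i) (n i) R →ₐ[R] Matrix (∀ i, n i) (∀ i, n i) R :=
  AlgHom.ofLinearMap
    { toFun A := piKroneckerHom (Pi.mulSingle i A)
      map_add' A B := by
        ext x y
        simp only [piKroneckerHom_apply, piKronecker_mulSingle_apply, Matrix.add_apply]
        split_ifs <;> simp
      map_smul' c A := by
        ext x y
        simp [piKroneckerHom_apply, piKronecker_mulSingle_apply] }
    (by simp) fun A B => by simp [Pi.mulSingle_mul]

lemma piKroneckerSingle_apply (i : ι) (A : Matrix (n i) (n i) R) (x y : ∀ i, n i) :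
    piKroneckerSingle i A x y = if ∀ j ≠ i, x j = y j then A (x i) (y i) else 0 :=
  piKronecker_mulSingle_apply i A x y

lemma commute_piKroneckerSingle {i j : ι} (hij : i ≠ j) (A : Matrix (n i) (n i) R)
    (B : Matrix (n j) (n j) R) : Commute (piKroneckerSingle i A) (piKroneckerSingle j B) :=
  (Pi.mulSingle_commute (f := fun k => Matrix (n k) (n k) R) hij A B).map piKroneckerHom

lemma noncommProd_piKroneckerSingle (A : ∀ i, Matrix (n i) (n i) R) :
    univ.noncommProd (fun i => piKroneckerSingle i (A i))
      (fun _ _ _ _ hij => commute_piKroneckerSingle hij _ _) = piKronecker A := by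
  calc _ = piKroneckerHom (univ.noncommProd (fun i => Pi.mulSingle i (A i))
        fun i _ j _ _ => Pi.mulSingle_apply_commute A i j) := (map_noncommProd _ _ _ _).symm
    _ = piKronecker A := by rw [noncommProd_mulSingle, piKroneckerHom_apply]

/-- The Kronecker sum `∑ᵢ 1 ⊗ ⋯ ⊗ A i ⊗ ⋯ ⊗ 1`: the generator of independent evolutions of the
coordinates. -/
def piKroneckerSum (A : ∀ i, Matrix (n i) (n i) R) : Matrix (∀ i, n i) (∀ i, n i) R :=
  ∑ i, piKroneckerSingle i (A i)

lemma piKroneckerSum_smul (c : R) (A : ∀ i, Matrix (n i) (n i) R) :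
    piKroneckerSum (fun i => c • A i) = c • piKroneckerSum A := by
  simp [piKroneckerSum, smul_sum]

lemma piKroneckerSum_apply (A : ∀ i, Matrix (n i) (n i) R) (x y : ∀ i, n i) :
    piKroneckerSum A x y = ∑ i, if ∀ j ≠ i, x j = y j then A i (x i) (y i) else 0 := by
  simp [piKroneckerSum, Matrix.sum_apply, piKroneckerSingle_apply]

lemma piKroneckerSum_apply_self (A : ∀ i, Matrix (n i) (n i) R) (x : ∀ i, n i) :
    piKroneckerSum A x x = ∑ i, A i (x i) (x i) := by
  simp [piKroneckerSum_apply]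

lemma piKroneckerSum_apply_of_ne (A : ∀ i, Matrix (n i) (n i) R) {x y : ∀ i, n i} {i : ι}
    (hi : x i ≠ y i) (hoff : ∀ j ≠ i, x j = y j) :
    piKroneckerSum A x y = A i (x i) (y i) := by
  rw [piKroneckerSum_apply, Fintype.sum_eq_single i fun k hk => if_neg fun h => hi (h i hk.symm),
    if_pos hoff]

lemma piKroneckerSum_apply_eq_zero (A : ∀ i, Matrix (n i) (n i) R) {x y : ∀ i, n i}
    (h : ∀ i, ¬ ∀ j ≠ i, x j = y j) : piKroneckerSum A x y = 0 := by
  rw [piKroneckerSum_apply]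
  exact sum_eq_zero fun i _ => if_neg (h i)

end PiKronecker

section Exponential

open NormedSpace

variable {ι R : Type*} [Fintype ι] [DecidableEq ι] {n : ι → Type*} [∀ i, DecidableEq (n i)]
  [∀ i, Fintype (n i)]

lemma continuous_piKroneckerSingle [CommSemiring R] [TopologicalSpace R] (i : ι) :
    Continuous (piKroneckerSingle i : Matrix (n i) (n i) R → Matrix (∀ i, n i) (∀ i, n i) R) := by
  refine continuous_matrix fun x y => ?_
  simp only [piKroneckerSingle_apply]
  split_ifs
  exacts [continuous_id.matrix_elem _ _, continuous_const]

lemma exp_piKroneckerSingle [NormedCommRing R] [NormedAlgebra ℚ R] [CompleteSpace R]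
    (i : ι) (A : Matrix (n i) (n i) R) :
    exp (piKroneckerSingle i A) = piKroneckerSingle i (exp A) := by
  open scoped Matrix.Norms.Operator in
  -- Instance search finds completeness only for the product uniformity, not for that of the norm.
  have : @CompleteSpace (Matrix (n i) (n i) R) PseudoMetricSpace.toUniformSpace :=
    inferInstanceAs (CompleteSpace (n i → n i → R))
  open scoped Matrix.Norms.Operator in
  exact (map_exp (piKroneckerSingle i) (continuous_piKroneckerSingle i) A).symm

theorem exp_piKroneckerSum [NormedCommRing R] [NormedAlgebra ℚ R] [CompleteSpace R]
    (A : ∀ i, Matrix (n i) (n i) R) :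
    exp (piKroneckerSum A) = piKronecker fun i => exp (A i) := by
  have hcomm : (↑(univ : Finset ι) : Set ι).Pairwise
      (Function.onFun Commute fun i => piKroneckerSingle i (A i)) :=
    fun _ _ _ _ hij => commute_piKroneckerSingle hij _ _
  rw [piKroneckerSum, Matrix.exp_sum_of_commute univ _ hcomm, ← noncommProd_piKroneckerSingle]
  exact noncommProd_congr rfl (fun i _ => exp_piKroneckerSingle i (A i)) _

theorem exp_smul_of_isIdempotentElem_s1 {𝕂 𝔸 : Type*} [NontriviallyNormedField 𝕂] [CharZero 𝕂]
    [ContinuousSMul ℚ 𝕂] [CompleteSpace 𝕂] [Ring 𝔸] [TopologicalSpace 𝔸] [IsTopologicalRing 𝔸]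
    [T2Space 𝔸] [Algebra 𝕂 𝔸] [ContinuousSMul 𝕂 𝔸] {p : 𝔸} (hp : IsIdempotentElem p) (t : 𝕂) :
    exp (t • p) = 1 - p + exp t • p := by
  have hterm (k : ℕ) : (k.factorial⁻¹ : 𝕂) • (t • p) ^ k =
      (if k = 0 then 1 - p else 0) + ((k.factorial⁻¹ : 𝕂) • t ^ k) • p := by
    cases k with
    | zero => simp
    | succ k => simp [smul_pow, hp.pow_succ_eq, smul_smul]
  have hsum : HasSum (fun k : ℕ => (k.factorial⁻¹ : 𝕂) • (t • p) ^ k) (1 - p + exp t • p) := by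
    simp only [hterm]
    exact (hasSum_ite_eq 0 (1 - p)).add ((exp_series_hasSum_exp' t).smul_const p)
  rw [exp_eq_tsum 𝕂]
  exact hsum.tsum_eq

end Exponential

section Absorbing

variable {α : Type*} [DecidableEq α]

/-- The transition matrix that sends every token to the mask `m`; the `t → ∞` limit of the
absorbing kernel. -/
def absorbingProj (R : Type*) [Zero R] [One R] (m : α) : Matrix α α R :=
  Matrix.of fun _ b => if b = m then 1 else 0

lemma absorbingProj_apply {R : Type*} [Zero R] [One R] (m a b : α) :
    absorbingProj R m a b = if b = m then 1 else 0 := rfl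

lemma isIdempotentElem_absorbingProj {R : Type*} [Semiring R] [Fintype α] (m : α) :
    IsIdempotentElem (absorbingProj R m) := by
  ext a b
  simp [Matrix.mul_apply, absorbingProj_apply]

/-- The per-token absorbing rate matrix: an unmasked token jumps to the mask `m` at rate one. -/
def absorbingRate (R : Type*) [Ring R] (m : α) : Matrix α α R :=
  absorbingProj R m - 1

lemma absorbingRate_apply {R : Type*} [Ring R] (m a b : α) :
    absorbingRate R m a b = (if b = m then 1 else 0) - if a = b then 1 else 0 := rfl

lemma exp_smul_absorbingRate {𝕂 : Type*} [NontriviallyNormedField 𝕂] [CharZero 𝕂]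
    [ContinuousSMul ℚ 𝕂] [CompleteSpace 𝕂] [Fintype α] (m : α) (t : 𝕂) :
    NormedSpace.exp (t • absorbingRate 𝕂 m) =
      absorbingProj 𝕂 m + NormedSpace.exp (-t) • (1 - absorbingProj 𝕂 m) := by
  have hneg : t • absorbingRate 𝕂 m = (-t) • (1 - absorbingProj 𝕂 m) := by
    rw [absorbingRate, neg_smul, ← smul_neg, neg_sub]
  rw [hneg, exp_smul_of_isIdempotentElem_s1 (isIdempotentElem_absorbingProj m).one_sub,
    sub_sub_cancel]

lemma exp_smul_absorbingRate_apply {S : ℕ} (m : Fin S) (t : ℝ) (a b : Fin S) :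
    NormedSpace.exp (t • absorbingRate ℝ m) a b = absK S m t a b := by
  simp only [exp_smul_absorbingRate, ← Real.exp_eq_exp_ℝ, Matrix.add_apply, Matrix.smul_apply,
    Matrix.sub_apply, Matrix.one_apply, absorbingProj_apply, smul_eq_mul, absK]
  obtain rfl | hab := eq_or_ne a b
  · obtain rfl | ha := eq_or_ne a m <;> simp [*]
  · obtain rfl | hb := eq_or_ne b m <;> simp [*, sub_eq_add_neg]

variable [Fintype α] {ι R : Type*} [Fintype ι] [DecidableEq ι] [CommRing R]

lemma piKroneckerSum_absorbingRate_apply_self (m : α) (x : ι → α) :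
    piKroneckerSum (fun _ => absorbingRate R m) x x = -(#{i | x i ≠ m} : R) := by
  have hdiag (a : α) : absorbingRate R m a a = -if a ≠ m then 1 else 0 := by
    by_cases ha : a = m <;> simp [absorbingRate_apply, ha]
  simp only [piKroneckerSum_apply_self, hdiag, sum_neg_distrib, sum_boole]

theorem eq_piKroneckerSum_absorbingRate {m : α} {Q : Matrix (ι → α) (ι → α) R}
    (hdiag : ∀ x, Q x x = -(#{i | x i ≠ m} : R))
    (hone : ∀ x y j, x j ≠ m → y j = m → (∀ i, i ≠ j → x i = y i) → Q x y = 1)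
    (hzero : ∀ x y, x ≠ y →
      (¬ ∃ j, x j ≠ m ∧ y j = m ∧ ∀ i, i ≠ j → x i = y i) → Q x y = 0) :
    Q = piKroneckerSum fun _ => absorbingRate R m := by
  ext x y
  by_cases hxy : x = y
  · rw [← hxy, hdiag, piKroneckerSum_absorbingRate_apply_self]
  by_cases hoff : ∃ j, ∀ i, i ≠ j → x i = y i
  · obtain ⟨j, hoff⟩ := hoff
    have hj : x j ≠ y j := fun hj =>
      hxy (funext fun i => (eq_or_ne i j).elim (fun hij => hij ▸ hj) (hoff i))
    rw [piKroneckerSum_apply_of_ne _ hj hoff, absorbingRate_apply, if_neg hj, sub_zero]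
    split_ifs with hm
    · exact hone x y j (hm ▸ hj) hm hoff
    · refine hzero x y hxy fun ⟨k, _, hyk, hk⟩ => hm ?_
      by_cases hjk : j = k
      exacts [hjk ▸ hyk, absurd (hk j hjk) hj]
  · rw [piKroneckerSum_apply_eq_zero _ (not_exists.mp hoff)]
    exact hzero x y hxy fun ⟨j, _, _, hj⟩ => hoff ⟨j, hj⟩

end Absorbing

lemma card_ne_mask_eq_sub_nmask {S d : ℕ} (m : Fin S) (x : Fin d → Fin S) :
    (#{i | x i ≠ m} : ℝ) = d - nmask S d m x := by
  have hcard := card_filter_add_card_filter_not (s := univ) fun i => x i = m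
  rw [nmask, eq_sub_iff_add_eq', ← Nat.cast_add, hcard, card_fin]

/-- The `d`-dimensional absorbing rate matrix has matrix exponential given by the
product of the per-token absorbing kernels. -/
theorem absorbing_matrix_exp_tensor (S d : ℕ) (hS : 2 ≤ S) (hd : 1 ≤ d) (m : Fin S)
    (Q : Matrix (Fin d → Fin S) (Fin d → Fin S) ℝ)
    (hQdiag : ∀ x : Fin d → Fin S, Q x x = -((d : ℝ) - (nmask S d m x : ℝ)))
    (hQone : ∀ (x y : Fin d → Fin S) (j : Fin d),
      x j ≠ m → y j = m → (∀ i : Fin d, i ≠ j → x i = y i) → Q x y = 1)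
    (hQzero : ∀ x y : Fin d → Fin S, x ≠ y →
      (¬ ∃ j : Fin d, x j ≠ m ∧ y j = m ∧ ∀ i : Fin d, i ≠ j → x i = y i) → Q x y = 0) :
    ∀ (t : ℝ) (x0 x : Fin d → Fin S),
      NormedSpace.exp (t • Q) x0 x = ∏ i : Fin d, absK S m t (x0 i) (x i) := by
  intro t x0 x
  have hQ : Q = piKroneckerSum fun _ => absorbingRate ℝ m :=
    eq_piKroneckerSum_absorbingRate
      (fun x => by rw [hQdiag, card_ne_mask_eq_sub_nmask]) hQone hQzero
  calc NormedSpace.exp (t • Q) x0 x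
      = NormedSpace.exp (piKroneckerSum fun _ : Fin d => t • absorbingRate ℝ m) x0 x := by
        rw [hQ, piKroneckerSum_smul]
    _ = ∏ i, NormedSpace.exp (t • absorbingRate ℝ m) (x0 i) (x i) := by
        rw [exp_piKroneckerSum, piKronecker_apply]
    _ = ∏ i, absK S m t (x0 i) (x i) := by simp only [exp_smul_absorbingRate_apply]
end

section
/- There exists a constant C > 0 depending only on S such that for every d ≥ 1, every probability mass function q0 on X, and every T ≥ 1, the Kullback–Leibler divergence between the forward marginal at time T and the surrogate initialization distribution with parameter ε = exp(−T) satisfies ∑_{x ∈ X, q_T x > 0} q_T x · Real.log (q_T x / p_init x) ≤ C · d · exp(−T), where p_init x = ∏_{i : Fin d} ((1 − exp(−T)) if x i = m, and exp(−T)/(S − 1) if x i ≠ m). (Note p_init x > 0 for every x, so the sum is well defined.) -/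
/-!
The relative entropy to a fixed reference is convex, and `q_T` is the mixture with weights `q0` of
the product laws `∏ i, P_T (x0 i) ·`; since the reference is a product too, the divergence of each
component splits as a sum over tokens. Put `ε = exp (-T)`. A token starting at `m` stays there and
contributes `-log (1 - ε) ≤ ε / (1 - ε)`. A token starting elsewhere is masked with exactly the
reference probability `1 - ε`, and otherwise keeps its value, at a density ratio of `S - 1`, so that
it contributes `ε * log (S - 1)`.
-/

open Finset

/-- Surrogate initialization (product) distribution with parameter `ε`. -/
noncomputable def pinit (S d : ℕ) (m : Fin S) (ε : ℝ) (x : Fin d → Fin S) : ℝ :=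
  ∏ i : Fin d, (if x i = m then 1 - ε else ε / ((S : ℝ) - 1))

section RelativeEntropy

/-- The relative entropy (Kullback–Leibler divergence) of weights `p` with respect to weights `q` on
a finite type. Points with `p x = 0` contribute `0`, as usual; points with `q x = 0` also contribute
`0`, where the usual convention is `∞` if `0 < p x`. -/
noncomputable def klSum {α : Type*} [Fintype α] (p q : α → ℝ) : ℝ :=
  ∑ x, p x * Real.log (p x / q x)

variable {α : Type*} [Fintype α]

theorem sum_filter_pos_eq_klSum {p : α → ℝ} (hp : 0 ≤ p) (q : α → ℝ) :
    ∑ x with 0 < p x, p x * Real.log (p x / q x) = klSum p q := by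
  refine sum_filter_of_ne fun x _ hx ↦ (hp x).lt_of_ne' ?_
  exact left_ne_zero_of_mul hx

theorem convexOn_mul_log_div {y : ℝ} (hy : y ≠ 0) :
    ConvexOn ℝ (Set.Ici 0) fun x ↦ x * Real.log (x / y) := by
  have hlinear : ConvexOn ℝ (Set.Ici (0 : ℝ)) fun x ↦ x * -Real.log y :=
    (LinearMap.mulRight ℝ (-Real.log y)).convexOn (convex_Ici 0)
  refine (Real.convexOn_mul_log.add hlinear).congr fun x _ ↦ ?_
  rcases eq_or_ne x 0 with rfl | hx
  · simp
  · simp only [Pi.add_apply, Real.log_div hx hy]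
    ring

theorem convexOn_klSum {q : α → ℝ} (hq : ∀ x, q x ≠ 0) :
    ConvexOn ℝ (Set.Ici 0) fun p ↦ klSum p q := by
  have hterm (x : α) :
      ConvexOn ℝ (Set.Ici 0) fun p : α → ℝ ↦ p x * Real.log (p x / q x) :=
    ((convexOn_mul_log_div (hq x)).comp_linearMap
      (LinearMap.proj (R := ℝ) (φ := fun _ : α ↦ ℝ) x)).subset
      (fun p (hp : 0 ≤ p) ↦ hp x) (convex_Ici 0)
  refine ⟨convex_Ici 0, fun p hp p' hp' a b ha hb hab ↦ ?_⟩
  simp only [klSum, smul_sum, ← sum_add_distrib]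
  exact sum_le_sum fun x _ ↦ (hterm x).2 hp hp' ha hb hab

end RelativeEntropy

section Product

variable {ι : Type*} [Fintype ι] [DecidableEq ι] {α : ι → Type*} [∀ i, Fintype (α i)]

theorem sum_prod_mul_apply {R : Type*} [CommSemiring R] {p : ∀ i, α i → R}
    (hp : ∀ i, ∑ a, p i a = 1) (i : ι) (f : α i → R) :
    ∑ x : ∀ i, α i, (∏ j, p j (x j)) * f (x i) = ∑ a, p i a * f a := by
  let p' : ∀ j, α j → R := Function.update p i fun a ↦ p i a * f a
  have hp'_of_ne {j : ι} (hj : j ≠ i) : p' j = p j := Function.update_of_ne hj _ _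
  have hp'_self : p' i = fun a ↦ p i a * f a := Function.update_self _ _ _
  have hprod (x : ∀ i, α i) : (∏ j, p j (x j)) * f (x i) = ∏ j, p' j (x j) := by
    rw [Fintype.prod_eq_mul_prod_compl i, Fintype.prod_eq_mul_prod_compl i, hp'_self,
      mul_right_comm]
    congr 1
    refine prod_congr rfl fun j hj ↦ ?_
    rw [hp'_of_ne (by simpa using hj)]
  calc ∑ x : ∀ i, α i, (∏ j, p j (x j)) * f (x i)
      = ∏ j, ∑ a, p' j a := by simp_rw [hprod, Fintype.prod_sum]
    _ = ∑ a, p' i a := Fintype.prod_eq_single i fun j hj ↦ by rw [hp'_of_ne hj, hp j]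
    _ = ∑ a, p i a * f a := by rw [hp'_self]

theorem klSum_prod {p q : ∀ i, α i → ℝ} (hp : ∀ i, ∑ a, p i a = 1) (hq : ∀ i a, q i a ≠ 0) :
    klSum (fun x : ∀ i, α i ↦ ∏ i, p i (x i)) (fun x ↦ ∏ i, q i (x i)) =
      ∑ i, klSum (p i) (q i) := by
  have hlog (x : ∀ i, α i) :
      (∏ j, p j (x j)) * Real.log ((∏ i, p i (x i)) / ∏ i, q i (x i)) =
        ∑ i, (∏ j, p j (x j)) * Real.log (p i (x i) / q i (x i)) := by
    by_cases hx : ∏ j, p j (x j) = 0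
    · simp [hx]
    · rw [← ne_eq, prod_ne_zero_iff] at hx
      rw [← prod_div_distrib, Real.log_prod fun i hi ↦ div_ne_zero (hx i hi) (hq i _), mul_sum]
  simp only [klSum, hlog]
  rw [sum_comm]
  exact sum_congr rfl fun i _ ↦
    sum_prod_mul_apply hp i fun a ↦ Real.log (p i a / q i a)

end Product

section AbsorbingKernel

variable {S : ℕ} (m : Fin S)

theorem absK_eq_mixture (t : ℝ) (a b : Fin S) :
    absK S m t a b =
      Real.exp (-t) * (if a = b then 1 else 0) +
        (1 - Real.exp (-t)) * (if m = b then 1 else 0) := by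
  unfold absK
  grind

theorem absK_nonneg {t : ℝ} (ht : 0 ≤ t) (a b : Fin S) : 0 ≤ absK S m t a b := by
  have : 0 ≤ 1 - Real.exp (-t) := sub_nonneg.2 (Real.exp_le_one_iff.2 (neg_nonpos.2 ht))
  rw [absK_eq_mixture]
  positivity

theorem sum_absK_mul (t : ℝ) (a : Fin S) (f : Fin S → ℝ) :
    ∑ b, absK S m t a b * f b = Real.exp (-t) * f a + (1 - Real.exp (-t)) * f m := by
  simp [absK_eq_mixture, add_mul, sum_add_distrib]

theorem sum_absK (t : ℝ) (a : Fin S) : ∑ b, absK S m t a b = 1 := by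
  simpa using sum_absK_mul m t a fun _ ↦ 1

/-- The law of a single token under the surrogate initialization `pinit`. -/
noncomputable def tokenInit (ε : ℝ) (b : Fin S) : ℝ :=
  if b = m then 1 - ε else ε / ((S : ℝ) - 1)

theorem pinit_eq_prod_tokenInit (d : ℕ) (ε : ℝ) :
    pinit S d m ε = fun x ↦ ∏ i, tokenInit m ε (x i) :=
  rfl

theorem tokenInit_pos (hS : 2 ≤ S) {ε : ℝ} (hε : 0 < ε) (hε' : ε < 1) (b : Fin S) :
    0 < tokenInit m ε b := by
  have : (2 : ℝ) ≤ S := mod_cast hS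
  unfold tokenInit
  split_ifs
  · linarith
  · exact div_pos hε (by linarith)

theorem klSum_absK_mask (t ε : ℝ) :
    klSum (absK S m t m) (tokenInit m ε) = -Real.log (1 - ε) := by
  rw [klSum, sum_absK_mul, ← add_mul, add_sub_cancel, one_mul]
  simp [absK, tokenInit]

theorem klSum_absK_of_ne {a : Fin S} (ha : a ≠ m) (t : ℝ) :
    klSum (absK S m t a) (tokenInit m (Real.exp (-t))) =
      Real.exp (-t) * Real.log ((S : ℝ) - 1) := by
  rw [klSum, sum_absK_mul]
  simp [absK, tokenInit, ha, div_div_cancel₀ (Real.exp_ne_zero _)]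

theorem klSum_absK_le {t : ℝ} (ht : 0 < t) (a : Fin S) :
    klSum (absK S m t a) (tokenInit m (Real.exp (-t))) ≤
      max (1 - Real.exp (-t))⁻¹ (Real.log ((S : ℝ) - 1)) * Real.exp (-t) := by
  have hpos : 0 < 1 - Real.exp (-t) := sub_pos.2 (Real.exp_lt_one_iff.2 (neg_neg_of_pos ht))
  rcases eq_or_ne a m with rfl | ha
  · calc klSum (absK S a t a) (tokenInit a (Real.exp (-t)))
        = -Real.log (1 - Real.exp (-t)) := klSum_absK_mask a t _
      _ ≤ (1 - Real.exp (-t))⁻¹ - 1 := by linarith [Real.one_sub_inv_le_log_of_pos hpos]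
      _ = (1 - Real.exp (-t))⁻¹ * Real.exp (-t) := by field_simp; ring
      _ ≤ _ := by gcongr; exact le_max_left _ _
  · rw [klSum_absK_of_ne m ha, mul_comm]
    gcongr
    exact le_max_right _ _

end AbsorbingKernel

section ForwardMarginal

variable {S d : ℕ} (m : Fin S) {q0 : (Fin d → Fin S) → ℝ} {t : ℝ}

theorem prod_absK_nonneg (ht : 0 ≤ t) (x0 x : Fin d → Fin S) :
    0 ≤ ∏ i, absK S m t (x0 i) (x i) :=
  prod_nonneg fun i _ ↦ absK_nonneg m ht (x0 i) (x i)

theorem fwd_nonneg (hq0 : ∀ x, 0 ≤ q0 x) (ht : 0 ≤ t) : 0 ≤ fwd S d m q0 t :=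
  fun x ↦ sum_nonneg fun x0 _ ↦ mul_nonneg (hq0 x0) (prod_absK_nonneg m ht x0 x)

theorem klSum_fwd_le_sum (hq0 : ∀ x, 0 ≤ q0 x) (hq0_sum : ∑ x, q0 x = 1) (ht : 0 ≤ t)
    {r : (Fin d → Fin S) → ℝ} (hr : ∀ x, r x ≠ 0) :
    klSum (fwd S d m q0 t) r ≤
      ∑ x0, q0 x0 * klSum (fun x ↦ ∏ i, absK S m t (x0 i) (x i)) r := by
  have hmixture :
      fwd S d m q0 t = ∑ x0, q0 x0 • fun x ↦ ∏ i, absK S m t (x0 i) (x i) := by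
    ext x
    simp [fwd]
  rw [hmixture]
  exact (convexOn_klSum hr).map_sum_le (fun x0 _ ↦ hq0 x0) hq0_sum
    fun x0 _ ↦ prod_absK_nonneg m ht x0

end ForwardMarginal

theorem absorbing_forward_KL_bound_general {S : ℕ} (hS : 2 ≤ S) (m : Fin S) {d : ℕ}
    {q0 : (Fin d → Fin S) → ℝ} (hq0 : ∀ x, 0 ≤ q0 x) (hq0_sum : ∑ x, q0 x = 1)
    {T : ℝ} (hT : 0 < T) :
    ∑ x with 0 < fwd S d m q0 T x,
        fwd S d m q0 T x * Real.log (fwd S d m q0 T x / pinit S d m (Real.exp (-T)) x) ≤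
      max (1 - Real.exp (-T))⁻¹ (Real.log ((S : ℝ) - 1)) * d * Real.exp (-T) := by
  set C := max (1 - Real.exp (-T))⁻¹ (Real.log ((S : ℝ) - 1))
  have htoken (b : Fin S) : tokenInit m (Real.exp (-T)) b ≠ 0 :=
    (tokenInit_pos m hS (Real.exp_pos _) (Real.exp_lt_one_iff.2 (neg_neg_of_pos hT)) b).ne'
  rw [sum_filter_pos_eq_klSum (fwd_nonneg m hq0 hT.le), pinit_eq_prod_tokenInit]
  calc klSum (fwd S d m q0 T) (fun x ↦ ∏ i, tokenInit m (Real.exp (-T)) (x i))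
      ≤ ∑ x0, q0 x0 * klSum (fun x : Fin d → Fin S ↦ ∏ i, absK S m T (x0 i) (x i))
          (fun x ↦ ∏ i, tokenInit m (Real.exp (-T)) (x i)) :=
        klSum_fwd_le_sum m hq0 hq0_sum hT.le fun x ↦ prod_ne_zero_iff.2 fun i _ ↦ htoken (x i)
    _ = ∑ x0, q0 x0 * ∑ i, klSum (absK S m T (x0 i)) (tokenInit m (Real.exp (-T))) := by
        simp_rw [klSum_prod (fun _ ↦ sum_absK m T _) fun _ ↦ htoken]
    _ ≤ ∑ x0, q0 x0 * ∑ _i : Fin d, C * Real.exp (-T) := by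
        gcongr with x0 _ i _
        · exact hq0 x0
        · exact klSum_absK_le m hT (x0 i)
    _ = C * d * Real.exp (-T) := by
        rw [← sum_mul, hq0_sum, one_mul, sum_const, card_univ, Fintype.card_fin, nsmul_eq_mul]
        ring

/-- KL divergence between the forward marginal at time `T` and the surrogate
initialization distribution with `ε = exp (-T)` is `O(d · exp (-T))`. -/
theorem absorbing_forward_KL_bound (S : ℕ) (hS : 2 ≤ S) (m : Fin S) :
    ∃ C : ℝ, 0 < C ∧
      ∀ d : ℕ, 1 ≤ d →
        ∀ q0 : (Fin d → Fin S) → ℝ, (∀ x, 0 ≤ q0 x) →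
          (∑ x : Fin d → Fin S, q0 x = 1) →
          ∀ T : ℝ, 1 ≤ T →
            ∑ x ∈ Finset.univ.filter (fun x : Fin d → Fin S => 0 < fwd S d m q0 T x),
                fwd S d m q0 T x *
                  Real.log (fwd S d m q0 T x / pinit S d m (Real.exp (-T)) x)
              ≤ C * d * Real.exp (-T) := by
  have hpos : 0 < 1 - Real.exp (-1) := sub_pos.2 (Real.exp_lt_one_iff.2 (by norm_num))
  refine ⟨max (1 - Real.exp (-1))⁻¹ (Real.log ((S : ℝ) - 1)), lt_max_of_lt_left (inv_pos.2 hpos),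
    fun d _ q0 hq0 hq0_sum T hT ↦ ?_⟩
  refine (absorbing_forward_KL_bound_general hS m hq0 hq0_sum (by linarith)).trans ?_
  gcongr
end

section
/- Let t > 0, let x ∈ X with x j = m for some coordinate j : Fin d, let b : Fin S with b ≠ m, and set y := x[j ↦ b]. Then the absorbing score admits the exact representation q_t y · (1 − exp(−t)) = exp(−t) · ∑_{x0 ∈ X, x0 j = b} q0 x0 · ∏_{i : Fin d} P_t (x0 i) (x i). In particular, when q_t x > 0 this says q_t(y)/q_t(x) = (exp(−t)/(1 − exp(−t))) · Pr(x0 j = b | x_t = x), the conditional probability under the forward process that the j-th initial token equals b given the state x at time t. -/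
/-! A token can only stay or become `m`, so a state `y` with `y j ≠ m` is reachable only from
initial states `x0` with `x0 j = y j`. On those, masking coordinate `j` of `y` changes one factor of
the transition probability, from `exp (-t)` to `1 - exp (-t)`; the remaining factors agree. -/

open Finset

theorem prod_apply_update_mul_eq {ι R : Type*} {β : ι → Type*} [Fintype ι] [DecidableEq ι]
    [CommMonoid R] (f : ∀ i, β i → R) (x : ∀ i, β i) (j : ι) (b : β j) {u v : R}
    (h : f j b * v = u * f j (x j)) :
    (∏ i, f i (Function.update x j b i)) * v = u * ∏ i, f i (x i) := by
  have hrest : ∏ i ∈ univ.erase j, f i (Function.update x j b i) =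
      ∏ i ∈ univ.erase j, f i (x i) :=
    prod_congr rfl fun i hi ↦ by rw [Function.update_of_ne (ne_of_mem_erase hi)]
  rw [← mul_prod_erase univ _ (mem_univ j), ← mul_prod_erase univ (fun i ↦ f i (x i)) (mem_univ j),
    hrest, Function.update_self, mul_right_comm, h, mul_assoc]

section AbsorbingKernel

variable {S : ℕ} {m a b : Fin S}

theorem absK_self_of_ne_mask (t : ℝ) (ha : a ≠ m) : absK S m t a a = Real.exp (-t) := by
  simp [absK, ha]

theorem absK_mask_of_ne_mask (t : ℝ) (ha : a ≠ m) : absK S m t a m = 1 - Real.exp (-t) := by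
  simp [absK, ha]

theorem absK_eq_zero (t : ℝ) (hab : a ≠ b) (hb : b ≠ m) : absK S m t a b = 0 := by
  simp [absK, hab, hb]

end AbsorbingKernel

section ForwardMarginal

variable {S d : ℕ} {m : Fin S} {j : Fin d}

theorem prod_absK_eq_zero (t : ℝ) {x0 y : Fin d → Fin S} (hne : x0 j ≠ y j) (hy : y j ≠ m) :
    ∏ i, absK S m t (x0 i) (y i) = 0 :=
  prod_eq_zero (mem_univ j) (absK_eq_zero t hne hy)

theorem prod_absK_update_mul (t : ℝ) {x0 x : Fin d → Fin S} (hx : x j = m) (hx0 : x0 j ≠ m) :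
    (∏ i, absK S m t (x0 i) (Function.update x j (x0 j) i)) * (1 - Real.exp (-t)) =
      Real.exp (-t) * ∏ i, absK S m t (x0 i) (x i) := by
  apply prod_apply_update_mul_eq (fun i ↦ absK S m t (x0 i))
  rw [hx, absK_self_of_ne_mask t hx0, absK_mask_of_ne_mask t hx0]

theorem fwd_eq_sum_filter (q0 : (Fin d → Fin S) → ℝ) (t : ℝ) {y : Fin d → Fin S} (hy : y j ≠ m) :
    fwd S d m q0 t y = ∑ x0 with x0 j = y j, q0 x0 * ∏ i, absK S m t (x0 i) (y i) := by
  refine (sum_filter_of_ne fun x0 _ hterm ↦ ?_).symm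
  by_contra hne
  exact hterm (by rw [prod_absK_eq_zero t hne hy, mul_zero])

end ForwardMarginal

theorem absorbing_score_representation_general {S d : ℕ} {m : Fin S}
    (q0 : (Fin d → Fin S) → ℝ) (t : ℝ) {x : Fin d → Fin S} {j : Fin d} (hxj : x j = m)
    {b : Fin S} (hb : b ≠ m) :
    fwd S d m q0 t (Function.update x j b) * (1 - Real.exp (-t)) =
      Real.exp (-t) * ∑ x0 with x0 j = b, q0 x0 * ∏ i, absK S m t (x0 i) (x i) := by
  have hyj : Function.update x j b j = b := Function.update_self j b x
  rw [fwd_eq_sum_filter q0 t (hyj.trans_ne hb), hyj, sum_mul, mul_sum]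
  refine sum_congr rfl fun x0 hx0 ↦ ?_
  obtain rfl : x0 j = b := (mem_filter_univ x0).mp hx0
  rw [mul_assoc, prod_absK_update_mul t hxj hb, mul_left_comm]

/-- Exact representation of the absorbing score: for `y = x[j ↦ b]` with `x j = m`
and `b ≠ m`, `q_t y · (1 - e^{-t}) = e^{-t} · Pr(x0 j = b, x_t = x)`. -/
theorem absorbing_score_representation (S d : ℕ) (hS : 2 ≤ S) (hd : 1 ≤ d) (m : Fin S)
    (q0 : (Fin d → Fin S) → ℝ) (hq0 : ∀ x, 0 ≤ q0 x)
    (hq0sum : ∑ x : Fin d → Fin S, q0 x = 1)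
    (t : ℝ) (ht : 0 < t) (x : Fin d → Fin S) (j : Fin d) (hxj : x j = m)
    (b : Fin S) (hb : b ≠ m) :
    fwd S d m q0 t (Function.update x j b) * (1 - Real.exp (-t))
      = Real.exp (-t) *
          ∑ x0 ∈ Finset.univ.filter (fun x0 : Fin d → Fin S => x0 j = b),
            q0 x0 * ∏ i : Fin d, absK S m t (x0 i) (x i) :=
  absorbing_score_representation_general q0 t hxj hb
end

section
/- Suppose the data distribution contains no mask tokens: q0 x0 = 0 whenever there exists i : Fin d with x0 i = m. Then there exists a constant c > 0 (depending on S, d, and q0, but not on t, x, or y) such that for every t > 0 and every admissible reverse transition (x, y) (x and y differ in exactly one coordinate j with x j = m and y j ≠ m) with q_t y > 0, the improved score lower bound holds: q_t y · (Real.exp t − 1) ≥ c · q_t x. In particular, as t → 0 the score q_t(y)/q_t(x) diverges at the same rate 1/(e^t − 1) as the matching upper bound. -/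
open Finset

/-!
For mask-free data, a clean state `x0` reaches `x` only if it agrees with `x` on the unmasked
coordinates, and the probability of doing so depends on `x` and `t` alone. Hence `q_t(x)` is a
weight `W_t(x)` times the data marginal `Q(x)` of the unmasked tokens of `x`. Unmasking one
coordinate multiplies the weight by `e^{-t} / (1 - e^{-t}) = 1 / (e^t - 1)`, so the score is
`Q(y) / (Q(x) (e^t - 1))`. Time enters only through `e^t - 1`, and the finitely many ratios
`Q(x) / Q(y)` are bounded.
-/

lemma exists_pos_forall_mul_le_of_pos {ι K : Type*} [Finite ι] [Field K] [LinearOrder K]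
    [IsStrictOrderedRing K] (f : ι → K) :
    ∃ c : K, 0 < c ∧ ∀ i j, 0 < f j → c * f i ≤ f j := by
  obtain ⟨M, hM⟩ := Finite.exists_le fun p : ι × ι => f p.1 / f p.2
  have hpos : 0 < max M 1 := lt_max_of_lt_right one_pos
  refine ⟨(max M 1)⁻¹, inv_pos.mpr hpos, fun i j hj => ?_⟩
  rw [inv_mul_le_iff₀ hpos, ← div_le_iff₀ hj]
  exact (hM (i, j)).trans (le_max_left M 1)

section TokenWeight

variable {ι α : Type*} [Fintype ι] [DecidableEq α] {m : α} {t : ℝ}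

/-- The probability that a token which is not the mask shows as `b` at time `t`, provided it can:
`b` is the mask or the token itself. -/
noncomputable def tokenWeight (m : α) (t : ℝ) (b : α) : ℝ :=
  if b = m then 1 - Real.exp (-t) else Real.exp (-t)

lemma tokenWeight_nonneg (ht : 0 ≤ t) (b : α) : 0 ≤ tokenWeight m t b := by
  unfold tokenWeight
  split_ifs
  · exact sub_nonneg.mpr (Real.exp_le_one_iff.mpr (neg_nonpos.mpr ht))
  · exact (Real.exp_pos _).le

lemma tokenWeight_mul_exp_sub_one {b : α} (hb : b ≠ m) :
    tokenWeight m t b * (Real.exp t - 1) = tokenWeight m t m := by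
  simp [tokenWeight, hb, mul_sub, ← Real.exp_add]

/-- The probability `W_t(x)` that a mask-free state shows as `x` at time `t`, provided it agrees
with `x` on the unmasked coordinates of `x`. -/
noncomputable def stateWeight (m : α) (t : ℝ) (x : ι → α) : ℝ :=
  ∏ i, tokenWeight m t (x i)

lemma stateWeight_nonneg (ht : 0 ≤ t) (x : ι → α) : 0 ≤ stateWeight m t x :=
  prod_nonneg fun i _ => tokenWeight_nonneg ht (x i)

lemma stateWeight_mul_exp_sub_one {x y : ι → α} {j : ι} (hxj : x j = m) (hyj : y j ≠ m)
    (hxy : ∀ i, i ≠ j → x i = y i) :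
    stateWeight m t y * (Real.exp t - 1) = stateWeight m t x := by
  classical
  calc stateWeight m t y * (Real.exp t - 1)
      = ∏ i, tokenWeight m t (y i) * (if i = j then Real.exp t - 1 else 1) := by
        rw [prod_mul_distrib, Fintype.prod_ite_eq', stateWeight]
    _ = stateWeight m t x := by
        refine prod_congr rfl fun i _ => ?_
        obtain rfl | hij := eq_or_ne i j
        · rw [if_pos rfl, hxj, tokenWeight_mul_exp_sub_one hyj]
        · rw [if_neg hij, mul_one, hxy i hij]

end TokenWeight

/-- The `q0`-mass `Q(x)` of the states that agree with `x` on the unmasked coordinates of `x`, that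
is, the marginal of `q0` at the unmasked tokens of `x`. -/
def unmaskedMarginal {ι α M : Type*} [Fintype ι] [DecidableEq ι] [Fintype α] [DecidableEq α]
    [AddCommMonoid M] (m : α) (q0 : (ι → α) → M) (x : ι → α) : M :=
  ∑ x0 with ∀ i, x i ≠ m → x0 i = x i, q0 x0

section Forward

variable {S d : ℕ} {m : Fin S} {q0 : (Fin d → Fin S) → ℝ} {t : ℝ}

lemma absK_of_ne_mask {a : Fin S} (ha : a ≠ m) (b : Fin S) :
    absK S m t a b = if b ≠ m → a = b then tokenWeight m t b else 0 := by
  unfold absK tokenWeight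
  grind

lemma prod_absK_of_forall_ne_mask {x0 : Fin d → Fin S} (hx0 : ∀ i, x0 i ≠ m)
    (x : Fin d → Fin S) :
    ∏ i, absK S m t (x0 i) (x i) =
      if ∀ i, x i ≠ m → x0 i = x i then stateWeight m t x else 0 := by
  simp only [absK_of_ne_mask (hx0 _), prod_ite_zero, mem_univ, true_imp_iff, stateWeight]

lemma fwd_eq_stateWeight_mul_unmaskedMarginal (hq0mask : ∀ x0, (∃ i, x0 i = m) → q0 x0 = 0)
    (x : Fin d → Fin S) :
    fwd S d m q0 t x = stateWeight m t x * unmaskedMarginal m q0 x := by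
  rw [fwd, unmaskedMarginal, mul_sum, sum_filter]
  refine sum_congr rfl fun x0 _ => ?_
  by_cases hx0 : ∃ i, x0 i = m
  · simp [hq0mask x0 hx0]
  · rw [prod_absK_of_forall_ne_mask (not_exists.mp hx0)]
    split_ifs
    · exact mul_comm _ _
    · exact mul_zero _

end Forward

theorem absorbing_score_lower_bound_no_mask_general (S d : ℕ) (m : Fin S)
    (q0 : (Fin d → Fin S) → ℝ)
    (hq0mask : ∀ x0 : Fin d → Fin S, (∃ i : Fin d, x0 i = m) → q0 x0 = 0) :
    ∃ c : ℝ, 0 < c ∧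
      ∀ t : ℝ, 0 ≤ t →
        ∀ (x y : Fin d → Fin S) (j : Fin d),
          x j = m → y j ≠ m → (∀ i : Fin d, i ≠ j → x i = y i) →
          0 < fwd S d m q0 t y →
          c * fwd S d m q0 t x ≤ fwd S d m q0 t y * (Real.exp t - 1) := by
  obtain ⟨c, hc, hle⟩ := exists_pos_forall_mul_le_of_pos (unmaskedMarginal m q0)
  refine ⟨c, hc, fun t ht x y j hxj hyj hxy hy => ?_⟩
  simp only [fwd_eq_stateWeight_mul_unmaskedMarginal hq0mask] at hy ⊢
  have hQy : 0 < unmaskedMarginal m q0 y := pos_of_mul_pos_right hy (stateWeight_nonneg ht y)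
  calc c * (stateWeight m t x * unmaskedMarginal m q0 x)
      = stateWeight m t x * (c * unmaskedMarginal m q0 x) := mul_left_comm ..
    _ ≤ stateWeight m t x * unmaskedMarginal m q0 y :=
        mul_le_mul_of_nonneg_left (hle x y hQy) (stateWeight_nonneg ht x)
    _ = stateWeight m t y * unmaskedMarginal m q0 y * (Real.exp t - 1) := by
        rw [← stateWeight_mul_exp_sub_one hxj hyj hxy, mul_right_comm]

/-- Improved score lower bound when the data distribution contains no mask tokens:
`q_t(y)/q_t(x) ≳ 1/(e^t - 1)`, matching the rate of the upper bound as `t → 0`. -/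
theorem absorbing_score_lower_bound_no_mask (S d : ℕ) (hS : 2 ≤ S) (hd : 1 ≤ d) (m : Fin S)
    (q0 : (Fin d → Fin S) → ℝ) (hq0 : ∀ x, 0 ≤ q0 x)
    (hq0sum : ∑ x : Fin d → Fin S, q0 x = 1)
    (hq0mask : ∀ x0 : Fin d → Fin S, (∃ i : Fin d, x0 i = m) → q0 x0 = 0) :
    ∃ c : ℝ, 0 < c ∧
      ∀ t : ℝ, 0 < t →
        ∀ (x y : Fin d → Fin S) (j : Fin d),
          x j = m → y j ≠ m → (∀ i : Fin d, i ≠ j → x i = y i) →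
          0 < fwd S d m q0 t y →
          c * fwd S d m q0 t x ≤ fwd S d m q0 t y * (Real.exp t - 1) := by
  obtain ⟨c, hc, hle⟩ := absorbing_score_lower_bound_no_mask_general S d m q0 hq0mask
  exact ⟨c, hc, fun t ht => hle t ht.le⟩
end

section
/- For every y ∈ X and every t > 0, the time derivative of the forward marginal satisfies |d/dt q_t(y)| ≤ q_t y · ( m̄(y) · exp(−t)/(1 − exp(−t)) + (d − m̄(y)) ), where d/dt q_t(y) denotes the derivative at t of the function u ↦ q_u y (which exists for all t) and m̄(y) is the number of coordinates i with y i = m. -/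
open Finset

/-!
A bound `|f'| ≤ c |f|` on the logarithmic derivative is additive under products, and for
nonnegative functions a common such bound survives nonnegative combinations. At time `t > 0` a
kernel entry ending at the mask satisfies it with `c = e⁻ᵗ / (1 - e⁻ᵗ)` (the logarithmic derivative
of `1 - e⁻ᵗ`), and any other entry with `c = 1`. These constants depend only on the endpoint, so the
products over coordinates have the same bound for every starting point, and averaging over `q0`
preserves it.
-/

section LogDerivBounds

variable {ι : Type*} (s : Finset ι)

theorem norm_deriv_prod_le {𝕜 𝕂 : Type*} [NontriviallyNormedField 𝕜] [NormedField 𝕂]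
    [NormedAlgebra 𝕜 𝕂] {f : ι → 𝕜 → 𝕂} {c : ι → ℝ} {t : 𝕜}
    (hf : ∀ i ∈ s, DifferentiableAt 𝕜 (f i) t)
    (hc : ∀ i ∈ s, ‖deriv (f i) t‖ ≤ ‖f i t‖ * c i) :
    ‖deriv (fun u => ∏ i ∈ s, f i u) t‖ ≤ ‖∏ i ∈ s, f i t‖ * ∑ i ∈ s, c i := by
  classical
  rw [deriv_fun_finsetProd hf, mul_sum]
  refine norm_sum_le_of_le s fun i hi => ?_
  calc ‖(∏ j ∈ s.erase i, f j t) • deriv (f i) t‖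
      = ‖∏ j ∈ s.erase i, f j t‖ * ‖deriv (f i) t‖ := norm_smul _ _
    _ ≤ ‖∏ j ∈ s.erase i, f j t‖ * (‖f i t‖ * c i) := by gcongr; exact hc i hi
    _ = ‖∏ j ∈ s, f j t‖ * c i := by rw [← mul_assoc, ← norm_mul, prod_erase_mul s _ hi]

theorem abs_deriv_sum_mul_le {w : ι → ℝ} {f : ι → ℝ → ℝ} {c t : ℝ} (hw : ∀ i ∈ s, 0 ≤ w i)
    (hf : ∀ i ∈ s, DifferentiableAt ℝ (f i) t)
    (hc : ∀ i ∈ s, |deriv (f i) t| ≤ f i t * c) :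
    |deriv (fun u => ∑ i ∈ s, w i * f i u) t| ≤ (∑ i ∈ s, w i * f i t) * c := by
  rw [deriv_fun_sum fun i hi => (hf i hi).const_mul (w i), sum_mul]
  refine (abs_sum_le_sum_abs _ _).trans <| sum_le_sum fun i hi => ?_
  rw [deriv_const_mul _ (hf i hi), abs_mul, abs_of_nonneg (hw i hi), mul_assoc]
  exact mul_le_mul_of_nonneg_left (hc i hi) (hw i hi)

end LogDerivBounds

/-- Bound on the logarithmic time derivative of the kernel entries `absK S m t a b` at `t > 0`,
uniform in the starting token `a`. At `t = 0` its value at the mask is the junk value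
`1 / 0 = 0`. -/
noncomputable def absKLogDerivBound {S : ℕ} (m : Fin S) (t : ℝ) (b : Fin S) : ℝ :=
  if b = m then Real.exp (-t) / (1 - Real.exp (-t)) else 1

section Kernel

variable {S : ℕ} (m : Fin S)

theorem differentiable_absK (a b : Fin S) : Differentiable ℝ fun t => absK S m t a b := by
  unfold absK
  split_ifs <;> fun_prop

theorem abs_deriv_absK_le {t : ℝ} (ht : 0 < t) (a b : Fin S) :
    |deriv (fun u => absK S m u a b) t| ≤ |absK S m t a b| * absKLogDerivBound m t b := by
  have one_sub_pos : 0 < 1 - Real.exp (-t) := by simpa using ht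
  have deriv_exp_neg : deriv (fun u : ℝ => Real.exp (-u)) t = -Real.exp (-t) := by
    simpa using (hasDerivAt_neg t).exp.deriv
  rcases eq_or_ne b m with rfl | hb
  · rcases eq_or_ne a b with rfl | hab
    · simp only [absK, absKLogDerivBound, if_true, deriv_const, abs_zero, abs_one, one_mul]
      positivity
    · simp only [absK, absKLogDerivBound, if_neg hab, if_true, deriv_const_sub, deriv_exp_neg,
        neg_neg, abs_of_pos one_sub_pos, Real.abs_exp]
      rw [mul_div_cancel₀ _ one_sub_pos.ne']
  · rcases eq_or_ne a b with rfl | hab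
    · simp [absK, absKLogDerivBound, hb, deriv_exp_neg]
    · simp [absK, hab, hb]

end Kernel

section Marginal

variable {S d : ℕ} (m : Fin S)

theorem sum_absKLogDerivBound (t : ℝ) (y : Fin d → Fin S) :
    ∑ i, absKLogDerivBound m t (y i) =
      nmask S d m y * Real.exp (-t) / (1 - Real.exp (-t)) + (d - nmask S d m y) := by
  have card_unmasked : (#{i | y i ≠ m} : ℝ) = d - nmask S d m y := by
    have card_add : nmask S d m y + #{i | y i ≠ m} = d := by
      simpa [nmask] using card_filter_add_card_filter_not (s := univ) (fun i => y i = m)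
    exact eq_sub_of_add_eq' (mod_cast card_add)
  simp only [absKLogDerivBound, sum_ite, sum_const, nsmul_eq_mul, mul_one]
  rw [card_unmasked, nmask, mul_div_assoc]

theorem differentiable_prod_absK (x y : Fin d → Fin S) :
    Differentiable ℝ fun t => ∏ i, absK S m t (x i) (y i) :=
  Differentiable.fun_finsetProd fun i _ => differentiable_absK m (x i) (y i)

theorem abs_deriv_prod_absK_le {t : ℝ} (ht : 0 < t) (x y : Fin d → Fin S) :
    |deriv (fun u => ∏ i, absK S m u (x i) (y i)) t| ≤
      (∏ i, absK S m t (x i) (y i)) * ∑ i, absKLogDerivBound m t (y i) := by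
  have prod_absK_nonneg : 0 ≤ ∏ i, absK S m t (x i) (y i) :=
    prod_nonneg fun i _ => absK_nonneg m ht.le (x i) (y i)
  simpa only [Real.norm_eq_abs, abs_of_nonneg prod_absK_nonneg] using
    norm_deriv_prod_le univ (fun i _ => differentiable_absK m (x i) (y i) t)
      (fun i _ => abs_deriv_absK_le m ht (x i) (y i))

theorem differentiable_fwd (q0 : (Fin d → Fin S) → ℝ) (y : Fin d → Fin S) :
    Differentiable ℝ fun t => fwd S d m q0 t y :=
  Differentiable.fun_sum fun x _ => (differentiable_prod_absK m x y).const_mul (q0 x)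

theorem absorbing_marginal_deriv_bound_general {q0 : (Fin d → Fin S) → ℝ}
    (hq0 : ∀ x, 0 ≤ q0 x) (y : Fin d → Fin S) :
    (∀ t : ℝ, DifferentiableAt ℝ (fun u : ℝ => fwd S d m q0 u y) t) ∧
      ∀ t : ℝ, 0 < t →
        |deriv (fun u : ℝ => fwd S d m q0 u y) t|
          ≤ fwd S d m q0 t y *
              ((nmask S d m y : ℝ) * Real.exp (-t) / (1 - Real.exp (-t))
                + ((d : ℝ) - (nmask S d m y : ℝ))) := by
  refine ⟨differentiable_fwd m q0 y, fun t ht => ?_⟩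
  rw [← sum_absKLogDerivBound]
  exact abs_deriv_sum_mul_le univ (fun x _ => hq0 x)
    (fun x _ => differentiable_prod_absK m x y t)
    (fun x _ => abs_deriv_prod_absK_le m ht x y)

end Marginal

/-- The forward marginal is differentiable in time, and for `t > 0` its time
derivative satisfies `|d/dt q_t(y)| ≤ q_t(y) (m̄(y) e^{-t}/(1-e^{-t}) + (d - m̄(y)))`. -/
theorem absorbing_marginal_deriv_bound (S d : ℕ) (hS : 2 ≤ S) (hd : 1 ≤ d) (m : Fin S)
    (q0 : (Fin d → Fin S) → ℝ) (hq0 : ∀ x, 0 ≤ q0 x)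
    (hq0sum : ∑ x : Fin d → Fin S, q0 x = 1) (y : Fin d → Fin S) :
    (∀ t : ℝ, DifferentiableAt ℝ (fun u : ℝ => fwd S d m q0 u y) t) ∧
      ∀ t : ℝ, 0 < t →
        |deriv (fun u : ℝ => fwd S d m q0 u y) t|
          ≤ fwd S d m q0 t y *
              ((nmask S d m y : ℝ) * Real.exp (-t) / (1 - Real.exp (-t))
                + ((d : ℝ) - (nmask S d m y : ℝ))) :=
  absorbing_marginal_deriv_bound_general m hq0 y
end

section
/- Let t > 0, let (x, y) be an admissible reverse transition (x and y differ in exactly one coordinate j with x j = m and y j ≠ m), and suppose q_t x > 0. Then the score function r(u) := q_u y / q_u x is differentiable at t and its derivative satisfies |r'(t)| ≤ r(t) · ( (m̄(x) + m̄(y)) · exp(−t)/(1 − exp(−t)) + (2d − m̄(x) − m̄(y)) ). In particular, since exp(−t)/(1 − exp(−t)) ≤ 1/t, one has |r'(t)| ≤ r(t) · ( (m̄(x) + m̄(y))/t + (2d − m̄(x) − m̄(y)) ). -/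
open Finset

/-!
Bound the *logarithmic* derivative of every quantity in sight. For a single kernel entry it is at
most `e⁻ᵗ / (1 - e⁻ᵗ)` in absolute value if the target token is the mask and at most `1` otherwise.
Such bounds add up over products, survive nonnegative combinations unchanged, and add up over
quotients: hence a bound for `q_t x`, and then for the score, that counts masked and unmasked
coordinates.
-/

/-- The logarithmic derivative of `f`, nonnegative at `t`, is at most `C` there in absolute value.
The inequality is multiplied out so that kernel entries with `f t = 0` are allowed; it then says
that the derivative vanishes. -/
structure LogDerivBoundAt (f : ℝ → ℝ) (C t : ℝ) : Prop where
  nonneg : 0 ≤ f t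
  differentiableAt : DifferentiableAt ℝ f t
  abs_deriv_le : |deriv f t| ≤ f t * C

namespace LogDerivBoundAt

variable {f g : ℝ → ℝ} {C D t : ℝ}

lemma mono (hf : LogDerivBoundAt f C t) (hCD : C ≤ D) : LogDerivBoundAt f D t :=
  ⟨hf.nonneg, hf.differentiableAt,
    hf.abs_deriv_le.trans (mul_le_mul_of_nonneg_left hCD hf.nonneg)⟩

lemma const {c : ℝ} (hc : 0 ≤ c) (hC : 0 ≤ C) : LogDerivBoundAt (fun _ ↦ c) C t :=
  ⟨hc, differentiableAt_const c, by simpa using mul_nonneg hc hC⟩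

lemma mul (hf : LogDerivBoundAt f C t) (hg : LogDerivBoundAt g D t) :
    LogDerivBoundAt (fun u ↦ f u * g u) (C + D) t where
  nonneg := mul_nonneg hf.nonneg hg.nonneg
  differentiableAt := hf.differentiableAt.fun_mul hg.differentiableAt
  abs_deriv_le := by
    rw [deriv_fun_mul hf.differentiableAt hg.differentiableAt]
    calc |deriv f t * g t + f t * deriv g t|
        ≤ |deriv f t| * g t + f t * |deriv g t| := by
          simpa only [abs_mul, abs_of_nonneg hf.nonneg, abs_of_nonneg hg.nonneg]
            using abs_add_le (deriv f t * g t) (f t * deriv g t)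
      _ ≤ f t * C * g t + f t * (g t * D) :=
          add_le_add (mul_le_mul_of_nonneg_right hf.abs_deriv_le hg.nonneg)
            (mul_le_mul_of_nonneg_left hg.abs_deriv_le hf.nonneg)
      _ = f t * g t * (C + D) := by ring

lemma inv (hf : LogDerivBoundAt f C t) (hft : 0 < f t) :
    LogDerivBoundAt (fun u ↦ (f u)⁻¹) C t where
  nonneg := inv_nonneg.2 hf.nonneg
  differentiableAt := hf.differentiableAt.fun_inv hft.ne'
  abs_deriv_le := by
    rw [deriv_fun_inv'' hf.differentiableAt hft.ne', abs_div, abs_neg, abs_of_pos (pow_pos hft 2)]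
    calc |deriv f t| / f t ^ 2
        ≤ f t * C / f t ^ 2 := by gcongr; exact hf.abs_deriv_le
      _ = (f t)⁻¹ * C := by field_simp

lemma div (hf : LogDerivBoundAt f C t) (hg : LogDerivBoundAt g D t) (hgt : 0 < g t) :
    LogDerivBoundAt (fun u ↦ f u / g u) (C + D) t := by
  simpa only [div_eq_mul_inv] using hf.mul (hg.inv hgt)

variable {ι : Type*} {s : Finset ι} {F : ι → ℝ → ℝ}

lemma sum (hF : ∀ i ∈ s, LogDerivBoundAt (F i) C t) :
    LogDerivBoundAt (fun u ↦ ∑ i ∈ s, F i u) C t where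
  nonneg := sum_nonneg fun i hi ↦ (hF i hi).nonneg
  differentiableAt := DifferentiableAt.fun_sum fun i hi ↦ (hF i hi).differentiableAt
  abs_deriv_le := by
    rw [deriv_fun_sum fun i hi ↦ (hF i hi).differentiableAt, sum_mul]
    exact (abs_sum_le_sum_abs _ _).trans (sum_le_sum fun i hi ↦ (hF i hi).abs_deriv_le)

lemma prod {B : ι → ℝ} (hF : ∀ i ∈ s, LogDerivBoundAt (F i) (B i) t) :
    LogDerivBoundAt (fun u ↦ ∏ i ∈ s, F i u) (∑ i ∈ s, B i) t := by
  induction s using Finset.cons_induction with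
  | empty => simpa using const zero_le_one le_rfl
  | cons i s hi ih =>
    simp only [prod_cons, sum_cons]
    exact (hF i (mem_cons_self i s)).mul (ih fun k hk ↦ hF k (mem_cons_of_mem hk))

end LogDerivBoundAt

section Exponential

variable {t : ℝ}

lemma one_sub_exp_neg_pos (ht : 0 < t) : 0 < 1 - Real.exp (-t) :=
  sub_pos.2 (Real.exp_lt_one_iff.2 (neg_lt_zero.2 ht))

lemma exp_neg_div_one_sub_exp_neg_le_one_div (ht : 0 < t) :
    Real.exp (-t) / (1 - Real.exp (-t)) ≤ 1 / t := by
  rw [div_le_div_iff₀ (one_sub_exp_neg_pos ht) ht, one_mul]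
  calc Real.exp (-t) * t
      ≤ Real.exp (-t) * (Real.exp t - 1) := by
        gcongr
        exact le_sub_iff_add_le.2 (Real.add_one_le_exp t)
    _ = 1 - Real.exp (-t) := by rw [mul_sub_one, ← Real.exp_add, neg_add_cancel, Real.exp_zero]

lemma logDerivBoundAt_exp_neg : LogDerivBoundAt (fun u ↦ Real.exp (-u)) 1 t where
  nonneg := (Real.exp_pos _).le
  differentiableAt := by fun_prop
  abs_deriv_le := by simp [(hasDerivAt_neg t).exp.deriv]

lemma logDerivBoundAt_one_sub_exp_neg (ht : 0 < t) :
    LogDerivBoundAt (fun u ↦ 1 - Real.exp (-u)) (Real.exp (-t) / (1 - Real.exp (-t))) t where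
  nonneg := (one_sub_exp_neg_pos ht).le
  differentiableAt := by fun_prop
  abs_deriv_le := by
    rw [mul_div_cancel₀ _ (one_sub_exp_neg_pos ht).ne', ((hasDerivAt_neg t).exp.const_sub 1).deriv]
    simp

end Exponential

lemma sum_ite_const {ι R : Type*} [Fintype ι] [Ring R] (p : ι → Prop) [DecidablePred p]
    (a b : R) :
    ∑ i, (if p i then a else b) = #{i | p i} * a + (Fintype.card ι - #{i | p i}) * b := by
  have hcard : (#{i | p i} : R) + #{i | ¬p i} = Fintype.card ι := by
    rw [← Nat.cast_add, card_filter_add_card_filter_not, card_univ]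
  rw [sum_ite, sum_const, sum_const, nsmul_eq_mul, nsmul_eq_mul, ← hcard, add_sub_cancel_left]

section AbsorbingDiffusion

variable {S d : ℕ} {m : Fin S} {q0 : (Fin d → Fin S) → ℝ} {t : ℝ}

lemma logDerivBoundAt_absK (ht : 0 < t) (a b : Fin S) :
    LogDerivBoundAt (fun u ↦ absK S m u a b)
      (if b = m then Real.exp (-t) / (1 - Real.exp (-t)) else 1) t := by
  have hE : 0 ≤ Real.exp (-t) / (1 - Real.exp (-t)) :=
    div_nonneg (Real.exp_pos _).le (one_sub_exp_neg_pos ht).le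
  by_cases hm : b = m
  · subst hm
    obtain rfl | hab := eq_or_ne a b
    · simpa [absK] using LogDerivBoundAt.const zero_le_one hE
    · simpa [absK, hab] using logDerivBoundAt_one_sub_exp_neg ht
  · obtain rfl | hab := eq_or_ne a b
    · simpa [absK, hm] using logDerivBoundAt_exp_neg
    · simpa [absK, hm, hab] using LogDerivBoundAt.const (le_refl (0 : ℝ)) zero_le_one

lemma logDerivBoundAt_fwd (hq0 : ∀ x, 0 ≤ q0 x) (ht : 0 < t) (x : Fin d → Fin S) :
    LogDerivBoundAt (fun u ↦ fwd S d m q0 u x)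
      (nmask S d m x * (Real.exp (-t) / (1 - Real.exp (-t))) + (d - nmask S d m x)) t := by
  refine .sum fun x0 _ ↦ ?_
  have hprod := LogDerivBoundAt.prod (s := univ) fun i _ ↦
    logDerivBoundAt_absK (m := m) ht (x0 i) (x i)
  rw [sum_ite_const, mul_one, Fintype.card_fin] at hprod
  simpa only [zero_add, nmask] using (LogDerivBoundAt.const (hq0 x0) le_rfl).mul hprod

lemma logDerivBoundAt_fwd_div_fwd (hq0 : ∀ x, 0 ≤ q0 x) (ht : 0 < t) {x : Fin d → Fin S}
    (hqx : 0 < fwd S d m q0 t x) (y : Fin d → Fin S) :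
    LogDerivBoundAt (fun u ↦ fwd S d m q0 u y / fwd S d m q0 u x)
      (((nmask S d m x : ℝ) + nmask S d m y) * (Real.exp (-t) / (1 - Real.exp (-t))) +
        (2 * d - nmask S d m x - nmask S d m y)) t := by
  convert (logDerivBoundAt_fwd hq0 ht y).div (logDerivBoundAt_fwd hq0 ht x) hqx using 1
  ring

end AbsorbingDiffusion

theorem absorbing_score_deriv_bound_general (S d : ℕ) (m : Fin S)
    (q0 : (Fin d → Fin S) → ℝ) (hq0 : ∀ x, 0 ≤ q0 x)
    (t : ℝ) (ht : 0 < t) (x y : Fin d → Fin S) (hqx : 0 < fwd S d m q0 t x) :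
    DifferentiableAt ℝ (fun u : ℝ => fwd S d m q0 u y / fwd S d m q0 u x) t ∧
      |deriv (fun u : ℝ => fwd S d m q0 u y / fwd S d m q0 u x) t|
        ≤ (fwd S d m q0 t y / fwd S d m q0 t x) *
            (((nmask S d m x : ℝ) + (nmask S d m y : ℝ))
                * Real.exp (-t) / (1 - Real.exp (-t))
              + (2 * (d : ℝ) - (nmask S d m x : ℝ) - (nmask S d m y : ℝ))) ∧
      |deriv (fun u : ℝ => fwd S d m q0 u y / fwd S d m q0 u x) t|
        ≤ (fwd S d m q0 t y / fwd S d m q0 t x) *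
            (((nmask S d m x : ℝ) + (nmask S d m y : ℝ)) / t
              + (2 * (d : ℝ) - (nmask S d m x : ℝ) - (nmask S d m y : ℝ))) := by
  have hscore := logDerivBoundAt_fwd_div_fwd hq0 ht hqx y
  have hscore_one_div := hscore.mono <| add_le_add_left (mul_le_mul_of_nonneg_left
    (exp_neg_div_one_sub_exp_neg_le_one_div ht) (by positivity)) _
  rw [← mul_div_assoc] at hscore
  rw [mul_one_div] at hscore_one_div
  exact ⟨hscore.differentiableAt, hscore.abs_deriv_le, hscore_one_div.abs_deriv_le⟩

/-- The score `r(u) = q_u(y)/q_u(x)` of an admissible reverse transition is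
differentiable, with `|r'(t)| ≤ r(t)((m̄(x)+m̄(y)) e^{-t}/(1-e^{-t}) + (2d-m̄(x)-m̄(y)))`,
hence also `|r'(t)| ≤ r(t)((m̄(x)+m̄(y))/t + (2d-m̄(x)-m̄(y)))`. -/
theorem absorbing_score_deriv_bound (S d : ℕ) (hS : 2 ≤ S) (hd : 1 ≤ d) (m : Fin S)
    (q0 : (Fin d → Fin S) → ℝ) (hq0 : ∀ x, 0 ≤ q0 x)
    (hq0sum : ∑ x : Fin d → Fin S, q0 x = 1)
    (t : ℝ) (ht : 0 < t) (x y : Fin d → Fin S) (j : Fin d)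
    (hxj : x j = m) (hyj : y j ≠ m) (hoff : ∀ i : Fin d, i ≠ j → x i = y i)
    (hqx : 0 < fwd S d m q0 t x) :
    DifferentiableAt ℝ (fun u : ℝ => fwd S d m q0 u y / fwd S d m q0 u x) t ∧
      |deriv (fun u : ℝ => fwd S d m q0 u y / fwd S d m q0 u x) t|
        ≤ (fwd S d m q0 t y / fwd S d m q0 t x) *
            (((nmask S d m x : ℝ) + (nmask S d m y : ℝ))
                * Real.exp (-t) / (1 - Real.exp (-t))
              + (2 * (d : ℝ) - (nmask S d m x : ℝ) - (nmask S d m y : ℝ))) ∧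
      |deriv (fun u : ℝ => fwd S d m q0 u y / fwd S d m q0 u x) t|
        ≤ (fwd S d m q0 t y / fwd S d m q0 t x) *
            (((nmask S d m x : ℝ) + (nmask S d m y : ℝ)) / t
              + (2 * (d : ℝ) - (nmask S d m x : ℝ) - (nmask S d m y : ℝ))) :=
  absorbing_score_deriv_bound_general S d m q0 hq0 t ht x y hqx
end

section
/- For every δ ≥ 0, the total variation distance between the data distribution and the forward marginal at time δ under the absorbing rate satisfies (1/2) · ∑_{x ∈ X} |q_δ x − q0 x| ≤ d · (1 − exp(−δ)), and hence is at most d · δ. -/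
open Finset

/-!
Each row of the token kernel is the mixture `e⁻ᵗ δ_a + (1 - e⁻ᵗ) δ_m`, so a sequence of `d` tokens
survives unchanged until time `t` with probability at least `e^{-dt}`. The total variation distance
between a point mass and a probability vector is the mass the latter puts elsewhere, here at most
`1 - e^{-dt}`, and averaging over the initial sequence does not increase it.
-/

section StochasticKernel

variable {R : Type*} [CommRing R] [LinearOrder R] [IsOrderedRing R]

theorem sum_abs_sub_single_eq {α : Type*} [Fintype α] [DecidableEq α] {p : α → R}
    (hp : p ∈ stdSimplex R α) (a : α) :
    ∑ y, |p y - (Pi.single a 1 : α → R) y| = 2 * (1 - p a) := by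
  have abs_diff (y : α) :
      |p y - (Pi.single a 1 : α → R) y| = p y + if a = y then 1 - 2 * p a else 0 := by
    rcases eq_or_ne a y with rfl | hay
    · rw [Pi.single_eq_same, if_pos rfl, abs_sub_comm,
        abs_of_nonneg (sub_nonneg.2 (mem_Icc_of_mem_stdSimplex hp a).2)]
      ring
    · rw [Pi.single_eq_of_ne' hay, if_neg hay, sub_zero, add_zero, abs_of_nonneg (hp.1 y)]
  calc ∑ y, |p y - (Pi.single a 1 : α → R) y|
      = ∑ y, (p y + if a = y then 1 - 2 * p a else 0) := sum_congr rfl fun y _ => abs_diff y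
    _ = 1 + (1 - 2 * p a) := by rw [sum_add_distrib, hp.2, Fintype.sum_ite_eq]
    _ = 2 * (1 - p a) := by ring

theorem sum_abs_sum_mul_sub_self_le {α : Type*} [Fintype α] {K : α → α → R}
    (hK : ∀ x, K x ∈ stdSimplex R α) (w : α → R) :
    ∑ y, |∑ x, w x * K x y - w y| ≤ 2 * ∑ x, |w x| * (1 - K x x) := by
  classical
  have diff_eq (y : α) :
      ∑ x, w x * K x y - w y = ∑ x, w x * (K x y - (Pi.single x 1 : α → R) y) := by
    simp only [mul_sub, sum_sub_distrib, Pi.single_apply, mul_ite, mul_one, mul_zero,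
      Fintype.sum_ite_eq]
  calc ∑ y, |∑ x, w x * K x y - w y|
      = ∑ y, |∑ x, w x * (K x y - (Pi.single x 1 : α → R) y)| := by simp only [diff_eq]
    _ ≤ ∑ y, ∑ x, |w x * (K x y - (Pi.single x 1 : α → R) y)| :=
        sum_le_sum fun y _ => abs_sum_le_sum_abs _ _
    _ = ∑ x, |w x| * ∑ y, |K x y - (Pi.single x 1 : α → R) y| := by
        rw [sum_comm]
        simp only [abs_mul, mul_sum]
    _ = 2 * ∑ x, |w x| * (1 - K x x) := by
        simp only [sum_abs_sub_single_eq (hK _), mul_left_comm _ (2 : R), mul_sum]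

end StochasticKernel

theorem prod_apply_mem_stdSimplex {R ι : Type*} {α : ι → Type*} [CommSemiring R] [PartialOrder R]
    [IsOrderedRing R] [Fintype ι] [DecidableEq ι] [∀ i, Fintype (α i)] {p : ∀ i, α i → R}
    (hp : ∀ i, p i ∈ stdSimplex R (α i)) :
    (fun x : ∀ i, α i => ∏ i, p i (x i)) ∈ stdSimplex R (∀ i, α i) := by
  refine ⟨fun x => prod_nonneg fun i _ => (hp i).1 (x i), ?_⟩
  calc ∑ x : ∀ i, α i, ∏ i, p i (x i)
      = ∏ i, ∑ a, p i a := (Fintype.prod_sum p).symm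
    _ = 1 := prod_eq_one fun i _ => (hp i).2

theorem one_sub_exp_neg_nat_mul_le (n : ℕ) (t : ℝ) :
    1 - Real.exp (-(n * t)) ≤ n * (1 - Real.exp (-t)) := by
  have bernoulli : 1 + n * (Real.exp (-t) - 1) ≤ Real.exp (-t) ^ n :=
    one_add_mul_sub_le_pow (by linarith [Real.exp_pos (-t)]) n
  rw [← mul_neg, Real.exp_nat_mul]
  linarith

section AbsorbingKernel

variable {S d : ℕ} {m : Fin S} {t : ℝ}

theorem absK_eq_smul_single_add (a : Fin S) :
    absK S m t a =
      Real.exp (-t) • Pi.single a 1 + (1 - Real.exp (-t)) • Pi.single m 1 := by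
  ext b
  simp only [absK, Pi.add_apply, Pi.smul_apply, Pi.single_apply, smul_eq_mul]
  grind

theorem absK_mem_stdSimplex (ht : 0 ≤ t) (a : Fin S) : absK S m t a ∈ stdSimplex ℝ (Fin S) := by
  rw [absK_eq_smul_single_add]
  exact convex_stdSimplex ℝ (Fin S) (single_mem_stdSimplex ℝ a) (single_mem_stdSimplex ℝ m)
    (Real.exp_nonneg _) (sub_nonneg.2 (Real.exp_le_one_iff.2 (neg_nonpos.2 ht)))
    (add_sub_cancel _ _)

theorem exp_neg_le_absK_self (ht : 0 ≤ t) (a : Fin S) : Real.exp (-t) ≤ absK S m t a a := by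
  rw [absK, if_pos rfl]
  split_ifs
  · exact Real.exp_le_one_iff.2 (neg_nonpos.2 ht)
  · exact le_rfl

theorem exp_neg_nat_mul_le_prod_absK_self (ht : 0 ≤ t) (x : Fin d → Fin S) :
    Real.exp (-(d * t)) ≤ ∏ i, absK S m t (x i) (x i) :=
  calc Real.exp (-(d * t))
      = ∏ _i : Fin d, Real.exp (-t) := by rw [← mul_neg, Real.exp_nat_mul, Fin.prod_const]
    _ ≤ ∏ i, absK S m t (x i) (x i) :=
        prod_le_prod (fun _ _ => Real.exp_nonneg _) fun i _ => exp_neg_le_absK_self ht (x i)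

end AbsorbingKernel

theorem absorbing_early_stopping_TV_bound_general (S d : ℕ) (m : Fin S)
    (q0 : (Fin d → Fin S) → ℝ) (δ : ℝ) (hδ : 0 ≤ δ) :
    (1 / 2) * ∑ x : Fin d → Fin S, |fwd S d m q0 δ x - q0 x|
      ≤ (∑ x : Fin d → Fin S, |q0 x|) * (1 - Real.exp (-(d * δ))) := by
  have tv_le : ∑ x, |fwd S d m q0 δ x - q0 x|
      ≤ 2 * ∑ x, |q0 x| * (1 - ∏ i, absK S m δ (x i) (x i)) :=
    sum_abs_sum_mul_sub_self_le
      (fun _ => prod_apply_mem_stdSimplex fun _ => absK_mem_stdSimplex hδ _) q0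
  have change_le : ∑ x, |q0 x| * (1 - ∏ i, absK S m δ (x i) (x i))
      ≤ (∑ x, |q0 x|) * (1 - Real.exp (-(d * δ))) := by
    rw [sum_mul]
    gcongr with x
    exact exp_neg_nat_mul_le_prod_absK_self hδ x
  linarith

/-- Early-stopping total-variation bound under the absorbing rate:
`TV(q_0, q_δ) ≤ d (1 - e^{-δ}) ≤ d δ`. -/
theorem absorbing_early_stopping_TV_bound (S d : ℕ) (hS : 2 ≤ S) (hd : 1 ≤ d) (m : Fin S)
    (q0 : (Fin d → Fin S) → ℝ) (hq0 : ∀ x, 0 ≤ q0 x)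
    (hq0sum : ∑ x : Fin d → Fin S, q0 x = 1) :
    ∀ δ : ℝ, 0 ≤ δ →
      (1 / 2) * ∑ x : Fin d → Fin S, |fwd S d m q0 δ x - q0 x|
          ≤ (d : ℝ) * (1 - Real.exp (-δ)) ∧
      (1 / 2) * ∑ x : Fin d → Fin S, |fwd S d m q0 δ x - q0 x| ≤ (d : ℝ) * δ := by
  intro δ hδ
  have tv_le : (1 / 2) * ∑ x, |fwd S d m q0 δ x - q0 x| ≤ 1 - Real.exp (-(d * δ)) := by
    simpa only [abs_of_nonneg (hq0 _), hq0sum, one_mul] using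
      absorbing_early_stopping_TV_bound_general S d m q0 δ hδ
  exact ⟨tv_le.trans (one_sub_exp_neg_nat_mul_le d δ),
    tv_le.trans (sub_le_comm.1 (Real.one_sub_le_exp_neg _))⟩
end
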